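/- Let β = (Λ/λ)(Q−1)+1 with Q = 2n+2 and 0 < λ ≤ Λ. Then Φ₂(ξ) = C₁ρ(ξ)^{2−β}+C₂ with C₁ ≥ 0 satisfies 𝓜⁺_{λ,Λ}(D²Φ₂) = 0 classically in ℝ^{2n+1}∖{0}, and r ↦ C₁r^{2−β}+C₂ is convex and decreasing on (0,∞). -/

import Mathlib

open scoped BigOperators

noncomputable section

/-- Direction vector of the Heisenberg vector field `X_i` at the point `ξ ∈ ℝ^{2n+1}`:
for `i < n`, `X_i = ∂_i + 2 ξ_{i+n} ∂_{2n}`; for `n ≤ i < 2n`, `X_i = ∂_i - 2 ξ_{i-n} ∂_{2n}`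
(indices `0,…,2n`, the last coordinate being index `2n`). -/
def Xvec (n : ℕ) (ξ : Fin (2*n+1) → ℝ) (i : Fin (2*n)) : Fin (2*n+1) → ℝ :=
  fun j =>
    (if (j : ℕ) = (i : ℕ) then 1 else 0) +
    (if (j : ℕ) = 2*n then
        (if h : (i : ℕ) < n then 2 * ξ ⟨(i : ℕ) + n, by omega⟩
         else -2 * ξ ⟨(i : ℕ) - n, by have := i.isLt; omega⟩)
      else 0)

/-- The Heisenberg vector field `X_i` acting on a function. -/
def X (n : ℕ) (i : Fin (2*n)) (f : (Fin (2*n+1) → ℝ) → ℝ)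
    (ξ : Fin (2*n+1) → ℝ) : ℝ :=
  fderiv ℝ f ξ (Xvec n ξ i)

/-- `∑_{i=1}^{2n} ξ_i²`, the squared euclidean norm of the horizontal coordinates. -/
def hsq (n : ℕ) (ξ : Fin (2*n+1) → ℝ) : ℝ :=
  ∑ i : Fin (2*n), (ξ ⟨(i : ℕ), by have := i.isLt; omega⟩)^2

/-- The homogeneous norm `ρ(ξ) = ((∑ ξ_i²)² + ξ_{2n+1}²)^{1/4}`. -/
def rho (n : ℕ) (ξ : Fin (2*n+1) → ℝ) : ℝ :=
  ((hsq n ξ)^2 + (ξ ⟨2*n, by omega⟩)^2) ^ (1/4 : ℝ)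

/-- `|∇_{H^n}ρ(ξ)|²`. -/
def gradSq (n : ℕ) (ξ : Fin (2*n+1) → ℝ) : ℝ :=
  ∑ i : Fin (2*n), (X n i (rho n) ξ)^2

/-- The symmetrized Heisenberg Hessian `D²_{H^n} f = (X_i X_j f)_{sym}`. -/
def HessH (n : ℕ) (f : (Fin (2*n+1) → ℝ) → ℝ) (ξ : Fin (2*n+1) → ℝ) :
    Matrix (Fin (2*n)) (Fin (2*n)) ℝ :=
  Matrix.of fun i j =>
    (X n i (fun η => X n j f η) ξ + X n j (fun η => X n i f η) ξ) / 2

/-- The Pucci maximal operator `𝓟⁺_{λ,Λ}(M) = -Λ ∑_{e_i<0} e_i - λ ∑_{e_i>0} e_i`. -/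
def pucciPlus (la La : ℝ) {k : ℕ} {M : Matrix (Fin k) (Fin k) ℝ}
    (hM : M.IsHermitian) : ℝ :=
  ∑ i, (-La * min (hM.eigenvalues i) 0 - la * max (hM.eigenvalues i) 0)

/-- The Pucci minimal operator `𝓟⁻_{λ,Λ}(M) = -Λ ∑_{e_i>0} e_i - λ ∑_{e_i<0} e_i`. -/
def pucciMinus (la La : ℝ) {k : ℕ} {M : Matrix (Fin k) (Fin k) ℝ}
    (hM : M.IsHermitian) : ℝ :=
  ∑ i, (-La * max (hM.eigenvalues i) 0 - la * min (hM.eigenvalues i) 0)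

/-!
Let `J` be the standard complex structure of `ℝ^{2n}`, `x` and `t` the horizontal and vertical
coordinates of `ξ`, and `g = ∇ρ`. Computing with the polynomial `ρ⁴ = |x|⁴ + t²` gives
`ρ³ g = |x|² x + t Jx`. So `g` arises from `x` by a complex scaling of modulus `ρ⁻¹`, which turns
the Hessian of `ρ⁴` into `D²ρ = ρ⁻¹ (|g|² I - g ⊗ g + 2 Jg ⊗ Jg)`.

This matrix is positive semidefinite, kills `g` and has trace `(2n+1)|g|²/ρ`. Hence for convex
decreasing `φ` the decomposition `D²(φ∘ρ) = φ'' g ⊗ g - (-φ') D²ρ` is the one into positive and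
negative parts, and `𝓜⁺` depends only on their traces. What remains is the Euler equation
`λ φ'' + Λ (2n+1) φ'/r = 0`, solved by the constants and by `r^p` with `λ (1-p) = Λ (2n+1)`.
-/

section Pucci

open Matrix MatrixOrder

theorem trace_cfc_eq_sum_eigenvalues {𝕜 ι : Type*} [RCLike 𝕜] [Fintype ι] [DecidableEq ι]
    {A : Matrix ι ι 𝕜} (hA : A.IsHermitian) (f : ℝ → ℝ) :
    (cfc f A).trace = ∑ i, (f (hA.eigenvalues i) : 𝕜) := by
  rw [hA.cfc_eq, IsHermitian.cfc, Unitary.conjStarAlgAut_apply, trace_mul_cycle,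
    Unitary.coe_star_mul_self, one_mul, trace_diagonal]
  simp

theorem pucciPlus_eq_trace (la La : ℝ) {k : ℕ} {M : Matrix (Fin k) (Fin k) ℝ}
    (hM : M.IsHermitian) : pucciPlus la La hM = La * M⁻.trace - la * M⁺.trace := by
  rw [CFC.posPart_def, CFC.negPart_def, cfcₙ_eq_cfc, cfcₙ_eq_cfc,
    trace_cfc_eq_sum_eigenvalues hM, trace_cfc_eq_sum_eigenvalues hM, Finset.mul_sum,
    Finset.mul_sum, ← Finset.sum_sub_distrib]
  refine Finset.sum_congr rfl fun i _ => ?_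
  rw [posPart_def, negPart_eq_neg_inf_zero, RCLike.ofReal_real_eq_id, id, id, mul_neg, neg_mul]

theorem pucciPlus_of_eq_sub (la La : ℝ) {k : ℕ} {M P N : Matrix (Fin k) (Fin k) ℝ}
    (hM : M.IsHermitian) (hMPN : M = P - N) (hP : P.PosSemidef) (hN : N.PosSemidef)
    (hPN : P * N = 0) : pucciPlus la La hM = La * N.trace - la * P.trace := by
  obtain ⟨rfl, rfl⟩ := CFC.posPart_negPart_unique hMPN hPN hP.nonneg hN.nonneg
  exact pucciPlus_eq_trace la La hM

theorem posSemidef_dotProduct_self_smul_one_sub_vecMulVec {ι : Type*} [Fintype ι] [DecidableEq ι]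
    (v : ι → ℝ) : ((v ⬝ᵥ v) • (1 : Matrix ι ι ℝ) - vecMulVec v v).PosSemidef := by
  refine .of_dotProduct_mulVec_nonneg (by simp [IsHermitian, transpose_vecMulVec]) fun x => ?_
  have cauchySchwarz : (v ⬝ᵥ x) ^ 2 ≤ (v ⬝ᵥ v) * (x ⬝ᵥ x) := by
    simpa only [dotProduct, ← pow_two] using Finset.sum_mul_sq_le_sq_mul_sq Finset.univ v x
  calc
    0 ≤ (v ⬝ᵥ v) * (x ⬝ᵥ x) - (v ⬝ᵥ x) ^ 2 := sub_nonneg.2 cauchySchwarz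
    _ = star x ⬝ᵥ ((v ⬝ᵥ v) • 1 - vecMulVec v v) *ᵥ x := by
      simp [sub_mulVec, smul_mulVec, vecMulVec_mulVec, dotProduct_sub, dotProduct_comm x v, pow_two]

end Pucci

section SymplecticMatrix

open Matrix

variable {n : ℕ}

/-- The splitting of the horizontal indices into two blocks of length `n`, which allows
`Matrix.J`, indexed by `Fin n ⊕ Fin n`, to act on `Fin (2 * n) → ℝ`. -/
def halves (n : ℕ) : Fin n ⊕ Fin n ≃ Fin (2 * n) :=
  finSumFinEquiv.trans (finCongr (two_mul n).symm)

/-- The standard complex structure `(x, y) ↦ (y, -x)` of `ℝ^{2n}`, which gives the vertical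
coefficients of the fields `X i`. It is the transpose of `Matrix.J` since Mathlib's `J` is
`(x, y) ↦ (-y, x)`. -/
def sympJ (n : ℕ) : Matrix (Fin (2 * n)) (Fin (2 * n)) ℝ :=
  (J (Fin n) ℝ)ᵀ.submatrix (halves n).symm (halves n).symm

theorem sympJ_transpose : (sympJ n)ᵀ = -sympJ n := by
  simp only [sympJ, transpose_submatrix, J_transpose, transpose_neg, submatrix_neg, Pi.neg_apply]

theorem sympJ_mul_self : sympJ n * sympJ n = -1 := by
  rw [sympJ, submatrix_mul_equiv, ← transpose_mul, J_squared, transpose_neg, transpose_one,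
    submatrix_neg, Pi.neg_apply, Pi.neg_apply, submatrix_one_equiv]

theorem sympJ_mulVec_comp_halves (x : Fin (2 * n) → ℝ) :
    (sympJ n *ᵥ x) ∘ halves n = Sum.elim (x ∘ halves n ∘ Sum.inr) (-(x ∘ halves n ∘ Sum.inl)) := by
  rw [sympJ, submatrix_mulVec_equiv, Function.comp_assoc, Equiv.symm_comp_self, Function.comp_id,
    Equiv.symm_symm, J, fromBlocks_transpose, fromBlocks_mulVec]
  simp [neg_mulVec, Function.comp_assoc]

theorem sympJ_mulVec_apply (x : Fin (2 * n) → ℝ) (i : Fin (2 * n)) :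
    (sympJ n *ᵥ x) i = if h : (i : ℕ) < n then x ⟨i + n, by omega⟩ else -x ⟨i - n, by omega⟩ := by
  obtain ⟨k, rfl⟩ := (halves n).surjective i
  refine (congrFun (sympJ_mulVec_comp_halves x) k).trans ?_
  rcases k with k | k
  · rw [dif_pos (by simp [halves])]
    exact congrArg x (by ext; simp [halves, add_comm])
  · rw [dif_neg (by simp [halves])]
    exact congrArg (-x ·) (by ext; simp [halves])

theorem sympJ_mulVec_sympJ_mulVec (x : Fin (2 * n) → ℝ) : sympJ n *ᵥ sympJ n *ᵥ x = -x := by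
  rw [mulVec_mulVec, sympJ_mul_self, neg_mulVec, one_mulVec]

theorem sympJ_mulVec_dotProduct (x y : Fin (2 * n) → ℝ) :
    sympJ n *ᵥ x ⬝ᵥ y = -(x ⬝ᵥ sympJ n *ᵥ y) := by
  rw [dotProduct_mulVec, ← mulVec_transpose, sympJ_transpose, neg_mulVec, neg_dotProduct, neg_neg]

theorem dotProduct_sympJ_mulVec_self (x : Fin (2 * n) → ℝ) : x ⬝ᵥ sympJ n *ᵥ x = 0 := by
  have skew := sympJ_mulVec_dotProduct x x
  rw [dotProduct_comm] at skew
  exact self_eq_neg.1 skew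

theorem sympJ_mulVec_dotProduct_sympJ_mulVec (x y : Fin (2 * n) → ℝ) :
    sympJ n *ᵥ x ⬝ᵥ sympJ n *ᵥ y = x ⬝ᵥ y := by
  rw [sympJ_mulVec_dotProduct, sympJ_mulVec_sympJ_mulVec, dotProduct_neg, neg_neg]

theorem smul_add_smul_sympJ_dotProduct_self (a b : ℝ) (x : Fin (2 * n) → ℝ) :
    (a • x + b • (sympJ n *ᵥ x)) ⬝ᵥ (a • x + b • (sympJ n *ᵥ x)) = (a ^ 2 + b ^ 2) * (x ⬝ᵥ x) := by
  simp only [add_dotProduct, dotProduct_add, smul_dotProduct, dotProduct_smul,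
    sympJ_mulVec_dotProduct_sympJ_mulVec, dotProduct_comm (sympJ n *ᵥ x) x,
    dotProduct_sympJ_mulVec_self, smul_eq_mul]
  ring

theorem vecMulVec_add_vecMulVec_sympJ_smul_add_smul (a b : ℝ) (x : Fin (2 * n) → ℝ) :
    vecMulVec (a • x + b • (sympJ n *ᵥ x)) (a • x + b • (sympJ n *ᵥ x))
        + vecMulVec (sympJ n *ᵥ (a • x + b • (sympJ n *ᵥ x)))
          (sympJ n *ᵥ (a • x + b • (sympJ n *ᵥ x))) =
      (a ^ 2 + b ^ 2) • (vecMulVec x x + vecMulVec (sympJ n *ᵥ x) (sympJ n *ᵥ x)) := by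
  rw [mulVec_add, mulVec_smul, mulVec_smul, sympJ_mulVec_sympJ_mulVec]
  ext i j
  simp only [Matrix.add_apply, Matrix.smul_apply, vecMulVec_apply, Pi.add_apply, Pi.neg_apply,
    Pi.smul_apply, smul_eq_mul]
  ring

end SymplecticMatrix

section HorizontalCalculus

open Matrix

variable {n : ℕ} {f g : (Fin (2 * n + 1) → ℝ) → ℝ} {ξ : Fin (2 * n + 1) → ℝ}

/-- The horizontal gradient `∇_{H^n} f = (X_1 f, …, X_{2n} f)`. -/
def horizGrad (n : ℕ) (f : (Fin (2 * n + 1) → ℝ) → ℝ) (ξ : Fin (2 * n + 1) → ℝ) : Fin (2 * n) → ℝ :=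
  fun i => X n i f ξ

theorem X_congr (i : Fin (2 * n)) (h : f =ᶠ[nhds ξ] g) : X n i f ξ = X n i g ξ := by
  rw [X, X, h.fderiv_eq]

theorem X_add (i : Fin (2 * n)) (hf : DifferentiableAt ℝ f ξ) (hg : DifferentiableAt ℝ g ξ) :
    X n i (fun η => f η + g η) ξ = X n i f ξ + X n i g ξ := by
  simp [X, fderiv_fun_add hf hg]

theorem X_sum {κ : Type*} (s : Finset κ) {F : κ → (Fin (2 * n + 1) → ℝ) → ℝ} (i : Fin (2 * n))
    (hF : ∀ k ∈ s, DifferentiableAt ℝ (F k) ξ) :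
    X n i (fun η => ∑ k ∈ s, F k η) ξ = ∑ k ∈ s, X n i (F k) ξ := by
  simp [X, fderiv_fun_sum hF]

theorem X_mul (i : Fin (2 * n)) (hf : DifferentiableAt ℝ f ξ) (hg : DifferentiableAt ℝ g ξ) :
    X n i (fun η => f η * g η) ξ = f ξ * X n i g ξ + g ξ * X n i f ξ := by
  simp [X, fderiv_fun_mul hf hg]

theorem X_const_mul (i : Fin (2 * n)) (c : ℝ) :
    X n i (fun η => c * f η) ξ = c * X n i f ξ :=
  DFunLike.congr_fun (congrFun (fderiv_const_smul_field (f := f) c) ξ) (Xvec n ξ i)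

theorem X_comp {φ : ℝ → ℝ} (i : Fin (2 * n)) (hφ : DifferentiableAt ℝ φ (f ξ))
    (hf : DifferentiableAt ℝ f ξ) :
    X n i (fun η => φ (f η)) ξ = deriv φ (f ξ) * X n i f ξ := by
  have chain := (hφ.hasDerivAt.comp_hasFDerivAt ξ hf.hasFDerivAt).fderiv
  simp only [Function.comp_def] at chain
  simp [X, chain]

theorem contDiff_Xvec (i : Fin (2 * n)) {k : WithTop ℕ∞} : ContDiff ℝ k fun ξ => Xvec n ξ i := by
  refine contDiff_pi.2 fun j => ?_
  unfold Xvec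
  split_ifs <;> fun_prop

theorem differentiableAt_X (i : Fin (2 * n)) (hf : ContDiffAt ℝ 2 f ξ) :
    DifferentiableAt ℝ (X n i f) ξ :=
  ((hf.fderiv_right (m := 1) (by norm_num)).clm_apply
    (contDiff_Xvec i).contDiffAt).differentiableAt one_ne_zero

theorem HessH_comp {φ : ℝ → ℝ} (hφ : ContDiffAt ℝ 2 φ (f ξ)) (hf : ContDiffAt ℝ 2 f ξ) :
    HessH n (fun η => φ (f η)) ξ =
      deriv (deriv φ) (f ξ) • vecMulVec (horizGrad n f ξ) (horizGrad n f ξ)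
        + deriv φ (f ξ) • HessH n f ξ := by
  have hf₁ : DifferentiableAt ℝ f ξ := hf.differentiableAt two_ne_zero
  have hφ' : DifferentiableAt ℝ (deriv φ) (f ξ) :=
    (hφ.derivWithin (m := 1) (by norm_num)).differentiableAt one_ne_zero
  have hX (j : Fin (2 * n)) : (X n j fun ζ => φ (f ζ)) =ᶠ[nhds ξ]
      fun η => deriv φ (f η) * X n j f η := by
    filter_upwards [hf.eventually (by simp),
      hf.continuousAt.eventually (hφ.eventually (by simp))] with η hfη hφη
    exact X_comp j (hφη.differentiableAt two_ne_zero) (hfη.differentiableAt two_ne_zero)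
  have hXX (i j : Fin (2 * n)) : X n i (X n j fun ζ => φ (f ζ)) ξ =
      deriv (deriv φ) (f ξ) * X n i f ξ * X n j f ξ + deriv φ (f ξ) * X n i (X n j f) ξ := by
    rw [X_congr i (hX j), X_mul i (hφ'.fun_comp' ξ hf₁) (differentiableAt_X j hf), X_comp i hφ' hf₁]
    ring
  ext i j
  simp only [HessH, of_apply, hXX, Matrix.add_apply, Matrix.smul_apply, vecMulVec_apply,
    smul_eq_mul, horizGrad]
  ring

end HorizontalCalculus

section Gauge

open Matrix

variable {n : ℕ} {ξ : Fin (2 * n + 1) → ℝ}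

/-- The horizontal coordinates `(ξ_1, …, ξ_{2n})` of a point of the Heisenberg group. -/
def horiz (ξ : Fin (2 * n + 1) → ℝ) : Fin (2 * n) → ℝ := fun i => ξ i.castSucc

theorem hsq_eq_dotProduct (ξ : Fin (2 * n + 1) → ℝ) : hsq n ξ = horiz ξ ⬝ᵥ horiz ξ :=
  Finset.sum_congr rfl fun _ _ => pow_two _

theorem Xvec_castSucc (ξ : Fin (2 * n + 1) → ℝ) (i j : Fin (2 * n)) :
    Xvec n ξ i j.castSucc = (1 : Matrix (Fin (2 * n)) (Fin (2 * n)) ℝ) i j := by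
  simp [Xvec, one_apply, Fin.ext_iff, eq_comm, j.isLt.ne]

theorem Xvec_last (ξ : Fin (2 * n + 1) → ℝ) (i : Fin (2 * n)) :
    Xvec n ξ i (Fin.last (2 * n)) = 2 * (sympJ n *ᵥ horiz ξ) i := by
  rw [sympJ_mulVec_apply]
  simp only [Xvec, Fin.val_last, i.isLt.ne', if_false, if_true, zero_add]
  split_ifs <;> simp [horiz]

theorem X_apply (i : Fin (2 * n)) (k : Fin (2 * n + 1)) (ξ : Fin (2 * n + 1) → ℝ) :
    X n i (fun η => η k) ξ = Xvec n ξ i k := by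
  rw [X, (hasFDerivAt_apply k ξ).fderiv, ContinuousLinearMap.proj_apply]

theorem X_horiz (i j : Fin (2 * n)) (ξ : Fin (2 * n + 1) → ℝ) :
    X n i (fun η => horiz η j) ξ = (1 : Matrix (Fin (2 * n)) (Fin (2 * n)) ℝ) i j :=
  (X_apply i j.castSucc ξ).trans (Xvec_castSucc ξ i j)

theorem X_last (i : Fin (2 * n)) (ξ : Fin (2 * n + 1) → ℝ) :
    X n i (fun η => η (Fin.last (2 * n))) ξ = 2 * (sympJ n *ᵥ horiz ξ) i :=
  (X_apply i _ ξ).trans (Xvec_last ξ i)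

theorem differentiable_horiz (i : Fin (2 * n)) : Differentiable ℝ fun ξ => horiz ξ i :=
  differentiable_apply i.castSucc

theorem differentiable_hsq : Differentiable ℝ (hsq n) := by
  unfold hsq
  fun_prop

theorem X_mulVec_horiz (A : Matrix (Fin (2 * n)) (Fin (2 * n)) ℝ) (i j : Fin (2 * n))
    (ξ : Fin (2 * n + 1) → ℝ) : X n i (fun η => (A *ᵥ horiz η) j) ξ = A j i := by
  have hd (k : Fin (2 * n)) : DifferentiableAt ℝ (fun η => horiz η k) ξ := differentiable_horiz k ξ
  simp only [mulVec, dotProduct]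
  rw [X_sum Finset.univ i fun k _ => (hd k).const_mul (A j k)]
  simp only [X_const_mul, X_horiz, one_apply, mul_ite, mul_one, mul_zero,
    Finset.sum_ite_eq, Finset.mem_univ, if_true]

theorem X_hsq (i : Fin (2 * n)) (ξ : Fin (2 * n + 1) → ℝ) : X n i (hsq n) ξ = 2 * horiz ξ i := by
  have hd (k : Fin (2 * n)) : DifferentiableAt ℝ (fun η => horiz η k) ξ := differentiable_horiz k ξ
  rw [funext hsq_eq_dotProduct]
  simp only [dotProduct]
  rw [X_sum Finset.univ i fun k _ => (hd k).fun_mul (hd k)]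
  simp only [X_mul i (hd _) (hd _), X_horiz, one_apply, mul_ite, mul_one, mul_zero,
    Finset.sum_add_distrib, Finset.sum_ite_eq, Finset.mem_univ, if_true]
  ring

theorem rho_pow_four (ξ : Fin (2 * n + 1) → ℝ) :
    rho n ξ ^ 4 = hsq n ξ ^ 2 + ξ (Fin.last (2 * n)) ^ 2 := by
  rw [rho, ← Real.rpow_mul_natCast (by positivity), show (1 / 4 : ℝ) * (4 : ℕ) = 1 by norm_num,
    Real.rpow_one]
  rfl

theorem sq_hsq_add_sq_last_pos (hξ : ξ ≠ 0) : 0 < hsq n ξ ^ 2 + ξ (Fin.last (2 * n)) ^ 2 := by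
  refine lt_of_le_of_ne (by positivity) fun h => hξ ?_
  obtain ⟨hs, ht⟩ := (add_eq_zero_iff_of_nonneg (sq_nonneg _) (sq_nonneg _)).1 h.symm
  have hh : horiz ξ = 0 := by
    rwa [sq_eq_zero_iff, hsq_eq_dotProduct, dotProduct_self_eq_zero] at hs
  exact funext <| Fin.lastCases (sq_eq_zero_iff.1 ht) (congrFun hh)

theorem rho_pos (hξ : ξ ≠ 0) : 0 < rho n ξ :=
  Real.rpow_pos_of_pos (sq_hsq_add_sq_last_pos hξ) _

theorem contDiffAt_rho (hξ : ξ ≠ 0) {k : WithTop ℕ∞} : ContDiffAt ℝ k (rho n) ξ := by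
  refine ContDiffAt.rpow_const_of_ne ?_ (sq_hsq_add_sq_last_pos hξ).ne'
  unfold hsq
  fun_prop

theorem X_rho_pow_four (i : Fin (2 * n)) (ξ : Fin (2 * n + 1) → ℝ) :
    X n i (fun η => rho n η ^ 4) ξ =
      4 * (hsq n ξ * horiz ξ i + ξ (Fin.last (2 * n)) * (sympJ n *ᵥ horiz ξ) i) := by
  have hs : DifferentiableAt ℝ (hsq n) ξ := differentiable_hsq ξ
  have ht : DifferentiableAt ℝ (fun η => η (Fin.last (2 * n))) ξ := by fun_prop
  simp only [rho_pow_four, pow_two]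
  rw [X_add i (hs.fun_mul hs) (ht.fun_mul ht), X_mul i hs hs, X_mul i ht ht, X_hsq, X_last]
  ring

theorem X_X_rho_pow_four (i j : Fin (2 * n)) (ξ : Fin (2 * n + 1) → ℝ) :
    X n i (X n j fun η => rho n η ^ 4) ξ =
      4 * (hsq n ξ * (1 : Matrix _ _ ℝ) i j + 2 * horiz ξ i * horiz ξ j
        + 2 * (sympJ n *ᵥ horiz ξ) i * (sympJ n *ᵥ horiz ξ) j
        + ξ (Fin.last (2 * n)) * sympJ n j i) := by
  have hs : DifferentiableAt ℝ (hsq n) ξ := differentiable_hsq ξ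
  have ht : DifferentiableAt ℝ (fun η => η (Fin.last (2 * n))) ξ := by fun_prop
  have hx : DifferentiableAt ℝ (fun η => horiz η j) ξ := differentiable_horiz j ξ
  have hy : DifferentiableAt ℝ (fun η => (sympJ n *ᵥ horiz η) j) ξ := by
    unfold mulVec dotProduct horiz
    fun_prop
  rw [funext (X_rho_pow_four j), X_const_mul, X_add i (hs.fun_mul hx) (ht.fun_mul hy),
    X_mul i hs hx, X_mul i ht hy, X_hsq, X_last, X_horiz, X_mulVec_horiz]
  ring

theorem HessH_rho_pow_four (ξ : Fin (2 * n + 1) → ℝ) :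
    HessH n (fun η => rho n η ^ 4) ξ =
      (4 : ℝ) • (hsq n ξ • 1 + (2 : ℝ) • (vecMulVec (horiz ξ) (horiz ξ)
        + vecMulVec (sympJ n *ᵥ horiz ξ) (sympJ n *ᵥ horiz ξ))) := by
  ext i j
  have skew : sympJ n j i = -sympJ n i j := congrFun₂ sympJ_transpose i j
  have one_comm : (1 : Matrix (Fin (2 * n)) (Fin (2 * n)) ℝ) j i = (1 : Matrix _ _ ℝ) i j := by
    simp [one_apply, eq_comm]
  simp only [HessH, of_apply, X_X_rho_pow_four, skew, one_comm, Matrix.add_apply, Matrix.smul_apply,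
    vecMulVec_apply, smul_eq_mul]
  ring

theorem rho_pow_three_smul_horizGrad (hξ : ξ ≠ 0) :
    rho n ξ ^ 3 • horizGrad n (rho n) ξ =
      hsq n ξ • horiz ξ + ξ (Fin.last (2 * n)) • (sympJ n *ᵥ horiz ξ) := by
  ext i
  have hX : X n i (fun η => rho n η ^ 4) ξ = 4 * rho n ξ ^ 3 * X n i (rho n) ξ := by
    rw [X_comp (φ := fun r => r ^ 4) i (by fun_prop)
      ((contDiffAt_rho hξ (k := 1)).differentiableAt one_ne_zero)]
    simp
  rw [X_rho_pow_four] at hX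
  simp only [horizGrad, Pi.smul_apply, Pi.add_apply, smul_eq_mul]
  linarith

theorem gradSq_eq_dotProduct (ξ : Fin (2 * n + 1) → ℝ) :
    gradSq n ξ = horizGrad n (rho n) ξ ⬝ᵥ horizGrad n (rho n) ξ :=
  Finset.sum_congr rfl fun _ _ => pow_two _

theorem rho_sq_mul_gradSq (hξ : ξ ≠ 0) : rho n ξ ^ 2 * gradSq n ξ = hsq n ξ := by
  have h : rho n ξ ^ 4 * (rho n ξ ^ 2 * gradSq n ξ) = rho n ξ ^ 4 * hsq n ξ := by
    calc
      _ = (rho n ξ ^ 3 • horizGrad n (rho n) ξ) ⬝ᵥ (rho n ξ ^ 3 • horizGrad n (rho n) ξ) := by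
        rw [smul_dotProduct, dotProduct_smul, ← gradSq_eq_dotProduct, smul_eq_mul, smul_eq_mul]
        ring
      _ = rho n ξ ^ 4 * hsq n ξ := by
        rw [rho_pow_three_smul_horizGrad hξ, smul_add_smul_sympJ_dotProduct_self,
          ← hsq_eq_dotProduct, ← rho_pow_four]
  exact mul_left_cancel₀ (pow_pos (rho_pos hξ) 4).ne' h

theorem rho_sq_smul_vecMulVec_horizGrad_add (hξ : ξ ≠ 0) :
    rho n ξ ^ 2 • (vecMulVec (horizGrad n (rho n) ξ) (horizGrad n (rho n) ξ)
        + vecMulVec (sympJ n *ᵥ horizGrad n (rho n) ξ) (sympJ n *ᵥ horizGrad n (rho n) ξ)) =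
      vecMulVec (horiz ξ) (horiz ξ)
        + vecMulVec (sympJ n *ᵥ horiz ξ) (sympJ n *ᵥ horiz ξ) := by
  have h := vecMulVec_add_vecMulVec_sympJ_smul_add_smul (hsq n ξ) (ξ (Fin.last (2 * n))) (horiz ξ)
  rw [← rho_pow_three_smul_horizGrad hξ, ← rho_pow_four] at h
  simp only [mulVec_smul, smul_vecMulVec, vecMulVec_smul, ← smul_add] at h
  refine smul_right_injective _ (pow_pos (rho_pos hξ) 4).ne' ?_
  dsimp only
  rw [← h, smul_smul, smul_smul]
  congr 1
  ring

theorem HessH_rho (hξ : ξ ≠ 0) :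
    HessH n (rho n) ξ = (rho n ξ)⁻¹ • (gradSq n ξ • 1
      - vecMulVec (horizGrad n (rho n) ξ) (horizGrad n (rho n) ξ)
      + (2 : ℝ) • vecMulVec (sympJ n *ᵥ horizGrad n (rho n) ξ)
        (sympJ n *ᵥ horizGrad n (rho n) ξ)) := by
  have hρ : rho n ξ ≠ 0 := (rho_pos hξ).ne'
  have hd₁ : deriv (fun r : ℝ => r ^ 4) = fun r => 4 * r ^ 3 := by ext; simp
  have hd₂ : deriv (fun r : ℝ => 4 * r ^ 3) = fun r => 12 * r ^ 2 := by ext; simp; ring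
  have chain := HessH_comp (φ := fun r => r ^ 4) (by fun_prop) (contDiffAt_rho hξ)
  rw [HessH_rho_pow_four, ← rho_sq_smul_vecMulVec_horizGrad_add hξ, ← rho_sq_mul_gradSq hξ, hd₁,
    hd₂] at chain
  ext i j
  have hij := congrFun₂ chain i j
  simp only [Matrix.add_apply, Matrix.sub_apply, Matrix.smul_apply, smul_eq_mul] at hij ⊢
  rw [eq_inv_mul_iff_mul_eq₀ hρ]
  refine mul_left_cancel₀ (pow_ne_zero 2 hρ) ?_
  linear_combination (-1 / 4) * hij

end Gauge

section Radial

open Matrix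

variable {n : ℕ} {ξ : Fin (2 * n + 1) → ℝ}

theorem posSemidef_HessH_rho (hξ : ξ ≠ 0) : (HessH n (rho n) ξ).PosSemidef := by
  rw [HessH_rho hξ, gradSq_eq_dotProduct]
  exact ((posSemidef_dotProduct_self_smul_one_sub_vecMulVec _).add
    ((posSemidef_vecMulVec_self_star (sympJ n *ᵥ horizGrad n (rho n) ξ)).smul zero_le_two)).smul
      (inv_nonneg.2 (rho_pos hξ).le)

theorem horizGrad_rho_vecMul_HessH_rho (hξ : ξ ≠ 0) :
    horizGrad n (rho n) ξ ᵥ* HessH n (rho n) ξ = 0 := by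
  rw [HessH_rho hξ, gradSq_eq_dotProduct]
  simp [vecMul_smul, vecMul_add, vecMul_sub, vecMul_vecMulVec, dotProduct_sympJ_mulVec_self]

theorem trace_HessH_rho (hξ : ξ ≠ 0) :
    (HessH n (rho n) ξ).trace = (2 * n + 1) * gradSq n ξ / rho n ξ := by
  rw [HessH_rho hξ]
  simp only [trace_smul, trace_add, trace_sub, trace_one, trace_vecMulVec, Fintype.card_fin,
    sympJ_mulVec_dotProduct_sympJ_mulVec, ← gradSq_eq_dotProduct, smul_eq_mul]
  push_cast
  ring

theorem pucciPlus_HessH_comp_rho (la La : ℝ) {φ : ℝ → ℝ} (hξ : ξ ≠ 0)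
    (hφ : ContDiffAt ℝ 2 φ (rho n ξ)) (hφ' : deriv φ (rho n ξ) ≤ 0)
    (hφ'' : 0 ≤ deriv (deriv φ) (rho n ξ))
    (hM : (HessH n (fun η => φ (rho n η)) ξ).IsHermitian) :
    pucciPlus la La hM = gradSq n ξ *
      (-la * deriv (deriv φ) (rho n ξ) - La * (2 * n + 1) * deriv φ (rho n ξ) / rho n ξ) := by
  have hsub : HessH n (fun η => φ (rho n η)) ξ =
      deriv (deriv φ) (rho n ξ) • vecMulVec (horizGrad n (rho n) ξ) (horizGrad n (rho n) ξ)
        - (-deriv φ (rho n ξ)) • HessH n (rho n) ξ := by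
    rw [HessH_comp hφ (contDiffAt_rho hξ), neg_smul, sub_neg_eq_add]
  have hpos := (posSemidef_vecMulVec_self_star (horizGrad n (rho n) ξ)).smul hφ''
  have hneg := (posSemidef_HessH_rho hξ).smul (neg_nonneg.2 hφ')
  have hmul : (deriv (deriv φ) (rho n ξ) •
      vecMulVec (horizGrad n (rho n) ξ) (horizGrad n (rho n) ξ)) *
        ((-deriv φ (rho n ξ)) • HessH n (rho n) ξ) = 0 := by
    rw [smul_mul_smul_comm, vecMulVec_mul, horizGrad_rho_vecMul_HessH_rho hξ, vecMulVec_zero,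
      smul_zero]
  rw [pucciPlus_of_eq_sub la La hM hsub hpos hneg hmul, trace_smul, trace_smul, trace_vecMulVec,
    trace_HessH_rho hξ, ← gradSq_eq_dotProduct, smul_eq_mul, smul_eq_mul]
  ring

end Radial

section PowerProfile

variable {C₁ C₂ p r : ℝ}

theorem deriv_const_mul_rpow_add_const :
    deriv (fun r : ℝ => C₁ * r ^ p + C₂) r = C₁ * p * r ^ (p - 1) := by
  rw [deriv_add_const, deriv_const_mul_field, Real.deriv_rpow_const, mul_assoc]

theorem deriv_deriv_const_mul_rpow_add_const :
    deriv (deriv fun r : ℝ => C₁ * r ^ p + C₂) r = C₁ * p * (p - 1) * r ^ (p - 1 - 1) := by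
  have hderiv : deriv (fun r : ℝ => C₁ * r ^ p + C₂) = fun r => C₁ * p * r ^ (p - 1) :=
    funext fun _ => deriv_const_mul_rpow_add_const
  rw [hderiv, deriv_const_mul_field, Real.deriv_rpow_const, ← mul_assoc]

theorem contDiffAt_const_mul_rpow_add_const (hr : r ≠ 0) {k : WithTop ℕ∞} :
    ContDiffAt ℝ k (fun r : ℝ => C₁ * r ^ p + C₂) r :=
  (contDiffAt_const.mul (Real.contDiffAt_rpow_const_of_ne hr)).add contDiffAt_const

theorem deriv_const_mul_rpow_add_const_nonpos (hC : 0 ≤ C₁) (hp : p ≤ 0) (hr : 0 ≤ r) :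
    deriv (fun r : ℝ => C₁ * r ^ p + C₂) r ≤ 0 := by
  rw [deriv_const_mul_rpow_add_const]
  exact mul_nonpos_of_nonpos_of_nonneg (mul_nonpos_of_nonneg_of_nonpos hC hp)
    (Real.rpow_nonneg hr _)

theorem deriv_deriv_const_mul_rpow_add_const_nonneg (hC : 0 ≤ C₁) (hp : p ≤ 0) (hr : 0 ≤ r) :
    0 ≤ deriv (deriv fun r : ℝ => C₁ * r ^ p + C₂) r := by
  rw [deriv_deriv_const_mul_rpow_add_const]
  exact mul_nonneg (mul_nonneg_of_nonpos_of_nonpos (mul_nonpos_of_nonneg_of_nonpos hC hp)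
    (by linarith)) (Real.rpow_nonneg hr _)

theorem convexOn_const_mul_rpow_add_const (hC : 0 ≤ C₁) (hp : p ≤ 0) :
    ConvexOn ℝ (Set.Ioi 0) fun r : ℝ => C₁ * r ^ p + C₂ := by
  have hdiff (r : ℝ) (hr : r ∈ Set.Ioi 0) : ContDiffAt ℝ 2 (fun r : ℝ => C₁ * r ^ p + C₂) r :=
    contDiffAt_const_mul_rpow_add_const (ne_of_gt hr)
  exact convexOn_of_deriv2_nonneg' (convex_Ioi 0)
    (fun r hr => ((hdiff r hr).differentiableAt two_ne_zero).differentiableWithinAt)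
    (fun r hr => (((hdiff r hr).derivWithin (m := 1) (by norm_num)).differentiableAt
      one_ne_zero).differentiableWithinAt)
    fun r hr => deriv_deriv_const_mul_rpow_add_const_nonneg hC hp (le_of_lt hr)

theorem antitoneOn_const_mul_rpow_add_const (hC : 0 ≤ C₁) (hp : p ≤ 0) :
    AntitoneOn (fun r : ℝ => C₁ * r ^ p + C₂) (Set.Ioi 0) := fun _ hr _ hs hrs =>
  add_le_add_left (mul_le_mul_of_nonneg_left
    (Real.antitoneOn_rpow_Ioi_of_exponent_nonpos hp hr hs hrs) hC) C₂

end PowerProfile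

/-- with `β = (Λ/λ)(Q-1)+1`, `Q = 2n+2`, the radial function
`Φ₂(ξ) = C₁ ρ(ξ)^{2-β} + C₂` with `C₁ ≥ 0` satisfies `𝓜⁺_{λ,Λ}(D²Φ₂) = 0`
classically in `ℝ^{2n+1} \ {0}`, and `r ↦ C₁ r^{2-β}+C₂` is convex and
decreasing on `(0,∞)`. -/
theorem fundamental_solution_pucci_plus_convex (n : ℕ) (hn : 1 ≤ n)
    (la La C₁ C₂ : ℝ) (h0 : 0 < la) (hle : la ≤ La) (hC : 0 ≤ C₁)
    (β : ℝ) (hβ : β = La / la * (2*n + 1) + 1)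
    (φ : ℝ → ℝ) (hφ : φ = fun r => C₁ * r ^ (2 - β) + C₂)
    (hM : ∀ ξ : Fin (2*n+1) → ℝ,
      (HessH n (fun η => φ (rho n η)) ξ).IsHermitian) :
    (∀ ξ : Fin (2*n+1) → ℝ, ξ ≠ 0 → pucciPlus la La (hM ξ) = 0) ∧
    ConvexOn ℝ (Set.Ioi 0) φ ∧ AntitoneOn φ (Set.Ioi 0) := by
  subst hφ
  have hp : 2 - β ≤ 0 := by
    have : 1 ≤ La / la * (2 * n + 1) :=
      one_le_mul_of_one_le_of_one_le ((one_le_div h0).2 hle) (by simp)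
    linarith
  have hβ' : la * (β - 1) = La * (2 * n + 1) := by
    rw [hβ]
    field_simp
    ring
  refine ⟨fun ξ hξ => ?_, convexOn_const_mul_rpow_add_const hC hp,
    antitoneOn_const_mul_rpow_add_const hC hp⟩
  have hρ := rho_pos hξ
  rw [pucciPlus_HessH_comp_rho la La hξ (contDiffAt_const_mul_rpow_add_const hρ.ne')
    (deriv_const_mul_rpow_add_const_nonpos hC hp hρ.le)
    (deriv_deriv_const_mul_rpow_add_const_nonneg hC hp hρ.le),
    deriv_deriv_const_mul_rpow_add_const, deriv_const_mul_rpow_add_const,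
    Real.rpow_sub_one hρ.ne' (2 - β - 1)]
  linear_combination gradSq n ξ * C₁ * (2 - β) * (rho n ξ ^ (2 - β - 1) / rho n ξ) * hβ'
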